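/- Let J : R^d -> R be differentiable, G-Lipschitz, L-smooth, and bounded. Let hat{J}(theta) = E_{v ~ Unif(B_d)}[J(theta + delta*v)] be the delta-smoothed objective and Delta_0 = hat{J}(theta_0) - inf_theta hat{J}(theta). Run the two-point zeroth-order SGD: at iteration i sample u_i uniformly from the unit sphere S^{d-1} and independent zero-mean noises eta_i^+, eta_i^- of variance sigma^2, set g_i = d*( J(theta_i + delta*u_i) + eta_i^+ - J(theta_i - delta*u_i) - eta_i^- )/(2*delta) * u_i and theta_{i+1} = theta_i - alpha*g_i, with step size alpha = sqrt( 2*Delta_0 / (L*T*(V + G^2)) ) where V = 2*d^2*G^2 + 2*d^2*sigma^2/delta^2. Then (1/T)*sum_{i=1}^T E||grad J(theta_i)||^2 <= 2*L^2*delta^2 + 4*sqrt(2*Delta_0*L*(V + G^2)) / sqrt(T). -/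

import Mathlib

/-!
Write `Ĵ` for the `δ`-smoothed objective (`smoothed J δ`) and `D(x) = E_v[∇J(x + δ v)]`
(`smoothGrad J δ`), which plays the role of `∇Ĵ`. It is never necessary to differentiate `Ĵ`:
averaging the descent lemma for `J` over the ball gives
`Ĵ(x + h) ≤ Ĵ(x) + ⟪D x, h⟫ + (L/2)‖h‖²` (`smooth_descent`), and this is all that is used.

The two-point estimator `g` is unbiased for `D` (`integral_inner_gradEst`). This is the divergence
theorem on the ball applied to the odd function `v ↦ J(x + δ v) - J(x - δ v)`
(`sphere_identity`, `divergence_ball`). Integrating against the Lipschitz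
weights `(R² - ‖x‖²)₊` (`ball_parts`) and passing to polar coordinates gives, for every `R ≥ 0`,
an identity between one-dimensional integrals over `[0, R]`; its derivative at `R = 1` is the
divergence theorem on the unit ball.

On the unit sphere `‖g‖² ≤ 2d²G² + (d²/δ²)((η⁺)² + (η⁻)²)`, whose expectation is `V`. Hence one round
started at `x` satisfies `E Ĵ(x - α g) ≤ Ĵ(x) - α‖D x‖² + (L/2)α²V` (`one_step`). The `i`-th iterate
depends only on the rounds before `i` (`iterate_congr`), so resampling the `i`-th coordinate of the
product measure (`measurePreserving_update`) turns this into a bound in expectation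
(`expected_step`). Telescoping yields `α ∑ E‖D θᵢ‖² ≤ Δ₀ + T(L/2)α²V`; the choice of `α` balances
the two terms (`sum_le_of_tuned_step`), and `‖∇J - D‖ ≤ Lδ` transfers the bound to `∇J`.

The step size vanishes when `Δ₀ = 0`, in which case the iterates stay at a minimizer `θ₀` of `Ĵ`,
where `D θ₀ = 0`, or when `V + G² = 0`, in which case `D` vanishes identically.
-/

open MeasureTheory Metric

/-- The uniform probability measure on the closed Euclidean unit ball in `ℝ^d`. -/
noncomputable def uniformBall (d : ℕ) : Measure (EuclideanSpace ℝ (Fin d)) :=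
  (volume (closedBall (0 : EuclideanSpace ℝ (Fin d)) 1))⁻¹ •
    volume.restrict (closedBall (0 : EuclideanSpace ℝ (Fin d)) 1)

/-- The uniform probability measure on the Euclidean unit sphere in `ℝ^d`
(the normalized surface measure, pushed forward to `ℝ^d`). -/
noncomputable def uniformSphere (d : ℕ) : Measure (EuclideanSpace ℝ (Fin d)) :=
  (((volume : Measure (EuclideanSpace ℝ (Fin d))).toSphere Set.univ)⁻¹ •
    (volume : Measure (EuclideanSpace ℝ (Fin d))).toSphere).map Subtype.val



/-! ### The divergence theorem on a ball -/

theorem integral_polar {d : ℕ} (hd : 1 ≤ d) (f : EuclideanSpace ℝ (Fin d) → ℝ)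
    (hf : Integrable f) :
    ∫ x, f x = ∫ r in Set.Ioi (0 : ℝ), r ^ (d - 1) *
      ∫ u : sphere (0 : EuclideanSpace ℝ (Fin d)) 1, f (r • (u : EuclideanSpace ℝ (Fin d)))
        ∂(volume : Measure (EuclideanSpace ℝ (Fin d))).toSphere := by
  have : Nonempty (Fin d) := ⟨⟨0, hd⟩⟩
  set μ : Measure (EuclideanSpace ℝ (Fin d)) := volume
  have hmp := μ.measurePreserving_homeomorphUnitSphereProd
  have hemb := (homeomorphUnitSphereProd (EuclideanSpace ℝ (Fin d))).measurableEmbedding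
  rw [finrank_euclideanSpace_fin] at hmp
  have key : ∀ x : ({(0)}ᶜ : Set (EuclideanSpace ℝ (Fin d))),
      (fun p : sphere (0 : EuclideanSpace ℝ (Fin d)) 1 × Set.Ioi (0 : ℝ) =>
        f ((p.2 : ℝ) • (p.1 : EuclideanSpace ℝ (Fin d))))
        (homeomorphUnitSphereProd (EuclideanSpace ℝ (Fin d)) x) = f x := by
    intro x
    have hx : ‖(x : EuclideanSpace ℝ (Fin d))‖ ≠ 0 := norm_ne_zero_iff.2 x.2
    simp [smul_smul, hx]
  have hint : Integrable (fun p : sphere (0 : EuclideanSpace ℝ (Fin d)) 1 × Set.Ioi (0 : ℝ) =>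
        f ((p.2 : ℝ) • (p.1 : EuclideanSpace ℝ (Fin d))))
        (μ.toSphere.prod (.volumeIoiPow (d - 1))) := by
    rw [← hmp.integrable_comp_emb hemb]
    have h2 : Integrable (fun x : ({(0)}ᶜ : Set (EuclideanSpace ℝ (Fin d))) => f x)
        (μ.comap (↑)) :=
      (integrableOn_iff_comap_subtypeVal (measurableSet_singleton _).compl).1 hf.integrableOn
    exact h2.congr (Filter.Eventually.of_forall fun x => (key x).symm)
  calc ∫ x, f x ∂μ = ∫ x : ({(0)}ᶜ : Set (EuclideanSpace ℝ (Fin d))), f x ∂(μ.comap (↑)) := by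
        rw [integral_subtype_comap (measurableSet_singleton _).compl f, restrict_compl_singleton]
    _ = ∫ p : sphere (0 : EuclideanSpace ℝ (Fin d)) 1 × Set.Ioi (0 : ℝ),
          f ((p.2 : ℝ) • (p.1 : EuclideanSpace ℝ (Fin d)))
          ∂(μ.toSphere.prod (.volumeIoiPow (d - 1))) := by
        rw [← hmp.integral_comp hemb]
        exact integral_congr_ae (Filter.Eventually.of_forall fun x => (key x).symm)
    _ = ∫ r : Set.Ioi (0 : ℝ), (∫ u : sphere (0 : EuclideanSpace ℝ (Fin d)) 1,
          f ((r : ℝ) • (u : EuclideanSpace ℝ (Fin d))) ∂μ.toSphere)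
          ∂(.volumeIoiPow (d - 1)) := integral_prod_symm _ hint
    _ = _ := by
      simp only [Measure.volumeIoiPow, ENNReal.ofReal]
      rw [integral_withDensity_eq_integral_smul,
        integral_subtype_comap measurableSet_Ioi fun a ↦ Real.toNNReal (a ^ (d - 1)) •
          (∫ u : sphere (0 : EuclideanSpace ℝ (Fin d)) 1,
          f (a • (u : EuclideanSpace ℝ (Fin d))) ∂μ.toSphere),
        setIntegral_congr_fun measurableSet_Ioi fun x hx ↦ ?_]
      · simp only [NNReal.smul_def, smul_eq_mul]
        rw [Real.coe_toNNReal _ (pow_nonneg hx.out.le _)]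
      · exact (measurable_subtype_coe.pow_const _).real_toNNReal

theorem setIntegral_ball_polar {d : ℕ} (hd : 1 ≤ d) (g : EuclideanSpace ℝ (Fin d) → ℝ)
    (hg : Continuous g) {R : ℝ} (hR : 0 ≤ R) :
    ∫ x in closedBall 0 R, g x = ∫ r in (0 : ℝ)..R, r ^ (d - 1) *
      ∫ u : sphere (0 : EuclideanSpace ℝ (Fin d)) 1, g (r • (u : EuclideanSpace ℝ (Fin d)))
        ∂(volume : Measure (EuclideanSpace ℝ (Fin d))).toSphere := by
  rw [← integral_indicator measurableSet_closedBall, integral_polar hd]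
  · rw [intervalIntegral.integral_of_le hR, ← Set.Ioi_inter_Iic,
      ← setIntegral_indicator measurableSet_Iic]
    refine setIntegral_congr_fun measurableSet_Ioi fun r hr => ?_
    have hr : 0 < r := hr
    have h (u : sphere (0 : EuclideanSpace ℝ (Fin d)) 1) :
        r • (u : EuclideanSpace ℝ (Fin d)) ∈ closedBall 0 R ↔ r ≤ R := by
      simp [norm_smul, abs_of_pos hr]
    by_cases hrR : r ≤ R
    · simp [Set.indicator, h, hrR]
    · simp [Set.indicator, h, hrR]
  · rw [integrable_indicator_iff measurableSet_closedBall]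
    exact hg.continuousOn.integrableOn_compact (isCompact_closedBall _ _)

theorem integral_sphere_continuous {d : ℕ} (g : EuclideanSpace ℝ (Fin d) → ℝ)
    (hg : Continuous g) : Continuous fun r : ℝ =>
      ∫ u : sphere (0 : EuclideanSpace ℝ (Fin d)) 1, g (r • (u : EuclideanSpace ℝ (Fin d)))
        ∂(volume : Measure (EuclideanSpace ℝ (Fin d))).toSphere := by
  have := continuous_parametric_integral_of_continuous
    (μ := (volume : Measure (EuclideanSpace ℝ (Fin d))).toSphere)
    (f := fun (r : ℝ) (u : sphere (0 : EuclideanSpace ℝ (Fin d)) 1) =>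
      g (r • (u : EuclideanSpace ℝ (Fin d)))) (s := Set.univ)
    (by unfold Function.uncurry; fun_prop) isCompact_univ
  simpa using this

/-- Integration by parts against the weight `(R² - ‖x‖²)₊`. The weight is Lipschitz with compact support,
so no regularity of the sphere of radius `R` is needed; its line derivative is `-2⟪x, e⟫` inside the
ball and `0` outside. -/
theorem ball_parts {d : ℕ} (hd : 1 ≤ d) (f : EuclideanSpace ℝ (Fin d) → ℝ)
    {C : NNReal} (hlip : LipschitzWith C f) (e : EuclideanSpace ℝ (Fin d)) {R : ℝ} (hR : 0 ≤ R) :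
    ∫ x in closedBall 0 R, (R ^ 2 - ‖x‖ ^ 2) * lineDeriv ℝ f x e
      = 2 * ∫ x in closedBall 0 R, inner ℝ x e * f x := by
  have : Nonempty (Fin d) := ⟨⟨0, hd⟩⟩
  -- `R² - min(‖x‖, R)²` is the positive part of `R² - ‖x‖²`, in a form that is easily Lipschitz.
  set φ : EuclideanSpace ℝ (Fin d) → ℝ := fun x => R ^ 2 - min ‖x‖ R ^ 2 with hφ
  have hφlip : LipschitzWith (Real.toNNReal (2 * R)) φ := by
    refine LipschitzWith.of_dist_le' fun x y => ?_
    rw [Real.dist_eq, dist_eq_norm]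
    have h1 : |min ‖y‖ R - min ‖x‖ R| ≤ ‖x - y‖ := by
      refine (abs_min_sub_min_le_max _ _ _ _).trans ?_
      rw [sub_self, abs_zero, max_eq_left (abs_nonneg _), norm_sub_rev]
      exact abs_norm_sub_norm_le _ _
    have h2 : φ x - φ y = (min ‖y‖ R - min ‖x‖ R) * (min ‖y‖ R + min ‖x‖ R) := by
      simp only [hφ]; ring
    have h3 : 0 ≤ min ‖y‖ R + min ‖x‖ R := by positivity
    rw [h2, abs_mul, abs_of_nonneg h3, mul_comm]
    gcongr
    linarith [min_le_right ‖y‖ R, min_le_right ‖x‖ R]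
  have hφout : ∀ x, x ∉ closedBall (0 : EuclideanSpace ℝ (Fin d)) R → φ x = 0 := by
    intro x hx
    have : R < ‖x‖ := by simpa using hx
    simp [hφ, min_eq_right this.le]
  have hφsupp : HasCompactSupport φ := HasCompactSupport.intro (isCompact_closedBall 0 R) hφout
  have hparts := hlip.integral_lineDeriv_mul_eq (μ := volume) hφlip hφsupp e
  have hL : ∫ x in closedBall 0 R, (R ^ 2 - ‖x‖ ^ 2) * lineDeriv ℝ f x e
      = ∫ x, lineDeriv ℝ f x e * φ x := by
    rw [← integral_indicator measurableSet_closedBall]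
    refine integral_congr_ae (Filter.Eventually.of_forall fun x => ?_)
    by_cases hx : x ∈ closedBall (0 : EuclideanSpace ℝ (Fin d)) R
    · have hx' : ‖x‖ ≤ R := by simpa using hx
      simp only [Set.indicator_of_mem hx, hφ, min_eq_left hx']
      ring
    · simp only [Set.indicator_of_notMem hx, hφout x hx, mul_zero]
  have hRt : 2 * ∫ x in closedBall 0 R, inner ℝ x e * f x
      = ∫ x, lineDeriv ℝ φ x (-e) * f x := by
    rw [← integral_const_mul, ← integral_indicator measurableSet_closedBall]
    refine integral_congr_ae ?_
    have hnull : ∀ᵐ x ∂(volume : Measure (EuclideanSpace ℝ (Fin d))),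
        x ∉ sphere (0 : EuclideanSpace ℝ (Fin d)) R :=
      measure_eq_zero_iff_ae_notMem.1 (Measure.addHaar_sphere volume 0 R)
    filter_upwards [hnull] with x hx
    have hne : ‖x‖ ≠ R := by simpa using hx
    rcases lt_or_gt_of_ne hne with h | h
    · have hmem : x ∈ closedBall (0 : EuclideanSpace ℝ (Fin d)) R := by simpa using h.le
      have hd1 : HasFDerivAt φ (-((2 : ℕ) • innerSL ℝ x)) x := by
        have h1 := (hasStrictFDerivAt_norm_sq x).hasFDerivAt.const_sub (R ^ 2)
        refine HasFDerivAt.congr_of_eventuallyEq (by simpa using h1) ?_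
        filter_upwards [continuous_norm.continuousAt.eventually_lt continuousAt_const h] with y hy
        simp only [hφ, min_eq_left (le_of_lt hy)]
      rw [(hd1.hasLineDerivAt (-e)).lineDeriv, Set.indicator_of_mem hmem]
      simp
      ring
    · have hmem : x ∉ closedBall (0 : EuclideanSpace ℝ (Fin d)) R := by simpa using h
      have hd1 : HasFDerivAt φ (0 : EuclideanSpace ℝ (Fin d) →L[ℝ] ℝ) x := by
        refine (hasFDerivAt_const (0 : ℝ) x).congr_of_eventuallyEq ?_
        filter_upwards [continuousAt_const.eventually_lt continuous_norm.continuousAt h] with y hy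
        exact hφout y (by simpa using hy)
      rw [(hd1.hasLineDerivAt (-e)).lineDeriv, Set.indicator_of_notMem hmem]
      simp
  rw [hL, hRt, hparts]

/-- The divergence theorem on the unit ball for the vector field `f • e`. In polar coordinates
`ball_parts` reads `R² A(R) - B(R) = 2 C(R)` with `A' = r ^ (d - 1) K`, `B' = r² A'` and
`C' = r ^ (d - 1) H`, where `K` and `H` are spherical integrals; differentiating at `R = 1` gives
`A(1) = H(1)`, the two terms `K(1)` cancelling. -/
theorem divergence_ball {d : ℕ} (hd : 1 ≤ d) (f : EuclideanSpace ℝ (Fin d) → ℝ)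
    {C : NNReal} (hlip : LipschitzWith C f) (e : EuclideanSpace ℝ (Fin d))
    (hcont : Continuous fun x => lineDeriv ℝ f x e) :
    ∫ x in closedBall 0 1, lineDeriv ℝ f x e
      = ∫ u : sphere (0 : EuclideanSpace ℝ (Fin d)) 1,
          f u * inner ℝ (u : EuclideanSpace ℝ (Fin d)) e
          ∂(volume : Measure (EuclideanSpace ℝ (Fin d))).toSphere := by
  set S := (volume : Measure (EuclideanSpace ℝ (Fin d))).toSphere
  set K : ℝ → ℝ := fun r => ∫ u : sphere (0 : EuclideanSpace ℝ (Fin d)) 1,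
    lineDeriv ℝ f (r • (u : EuclideanSpace ℝ (Fin d))) e ∂S with hK
  set H : ℝ → ℝ := fun r => ∫ u : sphere (0 : EuclideanSpace ℝ (Fin d)) 1,
    inner ℝ (r • (u : EuclideanSpace ℝ (Fin d))) e *
      f (r • (u : EuclideanSpace ℝ (Fin d))) ∂S with hH
  have hKc : Continuous K := integral_sphere_continuous _ hcont
  have hfc : Continuous f := hlip.continuous
  have hHc : Continuous H := integral_sphere_continuous (fun x => inner ℝ x e * f x)
    (by fun_prop)
  have hAc : Continuous fun r : ℝ => r ^ (d - 1) * K r := by fun_prop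
  have hBc : Continuous fun r : ℝ => r ^ (d - 1) * (r ^ 2 * K r) := by fun_prop
  have hCc : Continuous fun r : ℝ => r ^ (d - 1) * H r := by fun_prop
  have hid : ∀ R : ℝ, 0 ≤ R →
      R ^ 2 * (∫ r in (0 : ℝ)..R, r ^ (d - 1) * K r)
        - ∫ r in (0 : ℝ)..R, r ^ (d - 1) * (r ^ 2 * K r)
      = 2 * ∫ r in (0 : ℝ)..R, r ^ (d - 1) * H r := by
    intro R hR
    have h1 := ball_parts hd f hlip e hR
    rw [setIntegral_ball_polar hd _ (by fun_prop) hR,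
      setIntegral_ball_polar hd _ (by fun_prop) hR] at h1
    rw [← h1, ← intervalIntegral.integral_const_mul, ← intervalIntegral.integral_sub
      (by exact (Continuous.intervalIntegrable (by fun_prop) _ _))
      (hBc.intervalIntegrable _ _)]
    refine intervalIntegral.integral_congr fun r hr => ?_
    have : ∀ u : sphere (0 : EuclideanSpace ℝ (Fin d)) 1,
        ‖r • (u : EuclideanSpace ℝ (Fin d))‖ ^ 2 = r ^ 2 := by
      intro u; simp [norm_smul]
    simp only [this, integral_const_mul]
    simp only [hK]
    ring
  have hdA := intervalIntegral.integral_hasDerivAt_right (hAc.intervalIntegrable 0 1)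
    hAc.stronglyMeasurable.stronglyMeasurableAtFilter hAc.continuousAt
  have hdB := intervalIntegral.integral_hasDerivAt_right (hBc.intervalIntegrable 0 1)
    hBc.stronglyMeasurable.stronglyMeasurableAtFilter hBc.continuousAt
  have hdC := intervalIntegral.integral_hasDerivAt_right (hCc.intervalIntegrable 0 1)
    hCc.stronglyMeasurable.stronglyMeasurableAtFilter hCc.continuousAt
  have hl := ((hasDerivAt_pow 2 (1 : ℝ)).mul hdA).sub hdB
  have hr := (hdC.const_mul 2)
  have heq := hl.unique (hr.congr_of_eventuallyEq (by
    filter_upwards [lt_mem_nhds (zero_lt_one (α := ℝ))] with R hR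
    exact hid R hR.le))
  have hfin : ∫ r in (0 : ℝ)..1, r ^ (d - 1) * K r = H 1 := by
    norm_num at heq
    linarith
  rw [setIntegral_ball_polar hd _ hcont zero_le_one]
  refine hfin.trans ?_
  simp only [hH, one_smul, mul_comm]

/-! ### The descent lemma -/

theorem gradient_lineDeriv {d : ℕ} {J : EuclideanSpace ℝ (Fin d) → ℝ}
    (hdiff : Differentiable ℝ J) (δ : ℝ) (x v e : EuclideanSpace ℝ (Fin d)) :
    HasLineDerivAt ℝ (fun v => J (x + δ • v)) (δ * inner ℝ (gradient J (x + δ • v)) e) v e := by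
  have h1 := (hdiff (x + δ • v)).hasGradientAt.hasFDerivAt
  have h2 : HasFDerivAt (fun v : EuclideanSpace ℝ (Fin d) => x + δ • v)
      (δ • ContinuousLinearMap.id ℝ (EuclideanSpace ℝ (Fin d))) v :=
    ((hasFDerivAt_id v).const_smul δ).const_add x
  have h3 := (h1.comp v h2).hasLineDerivAt e
  simpa [Function.comp_def, inner_smul_right] using h3

/-- The quadratic upper bound of an `L`-smooth function: the difference of the two sides along the
segment from `x` to `x + h` is monotone. -/
theorem descent_lemma {d : ℕ} {J : EuclideanSpace ℝ (Fin d) → ℝ} {L : ℝ}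
    (hdiff : Differentiable ℝ J)
    (hsmooth : ∀ x y, ‖gradient J x - gradient J y‖ ≤ L * ‖x - y‖)
    (x h : EuclideanSpace ℝ (Fin d)) :
    J (x + h) ≤ J x + inner ℝ (gradient J x) h + L / 2 * ‖h‖ ^ 2 := by
  set φ : ℝ → ℝ := fun t => J (x + t • h) - t * inner ℝ (gradient J x) h
    - L / 2 * ‖h‖ ^ 2 * t ^ 2 with hφ
  have hder : ∀ t : ℝ, HasDerivAt φ (inner ℝ (gradient J (x + t • h)) h
      - inner ℝ (gradient J x) h - L / 2 * ‖h‖ ^ 2 * (2 * t)) t := by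
    intro t
    have h1 := (hdiff (x + t • h)).hasGradientAt.hasFDerivAt
    have h2 : HasDerivAt (fun t : ℝ => x + t • h) h t := by
      simpa using ((hasDerivAt_id t).smul_const h).const_add x
    have h3 : HasDerivAt (fun t : ℝ => J (x + t • h)) (inner ℝ (gradient J (x + t • h)) h) t := by
      simpa [Function.comp_def] using h1.comp_hasDerivAt t h2
    have h4 := (hasDerivAt_id t).mul_const (inner ℝ (gradient J x) h)
    have h5 := (hasDerivAt_pow 2 t).const_mul (L / 2 * ‖h‖ ^ 2)
    exact ((h3.sub h4).sub h5).congr_deriv (by simp)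
  have hanti : AntitoneOn φ (Set.Icc 0 1) := by
    refine antitoneOn_of_deriv_nonpos (convex_Icc 0 1)
      (fun t _ => (hder t).continuousAt.continuousWithinAt)
      (fun t _ => (hder t).differentiableAt.differentiableWithinAt) fun t ht => ?_
    rw [interior_Icc] at ht
    rw [(hder t).deriv, ← inner_sub_left]
    have h1 := real_inner_le_norm (gradient J (x + t • h) - gradient J x) h
    have h2 := hsmooth (x + t • h) x
    rw [add_sub_cancel_left, norm_smul, Real.norm_eq_abs, abs_of_pos ht.1] at h2
    nlinarith [mul_le_mul_of_nonneg_right h2 (norm_nonneg h)]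
  have h01 := hanti (Set.left_mem_Icc.2 zero_le_one) (Set.right_mem_Icc.2 zero_le_one) zero_le_one
  simp only [hφ, one_smul, zero_smul, add_zero] at h01
  linarith

/-! ### Uniform measures on the ball and the sphere -/

theorem uniformBall_isProb (d : ℕ) : IsProbabilityMeasure (uniformBall d) := by
  constructor
  rw [uniformBall, Measure.smul_apply, Measure.restrict_apply_univ, smul_eq_mul]
  exact ENNReal.inv_mul_cancel (measure_closedBall_pos _ _ one_pos).ne'
    measure_closedBall_lt_top.ne

theorem uniformSphere_isProb {d : ℕ} (hd : 1 ≤ d) : IsProbabilityMeasure (uniformSphere d) := by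
  have : Nonempty (Fin d) := ⟨⟨0, hd⟩⟩
  constructor
  rw [uniformSphere, Measure.map_apply measurable_subtype_coe .univ, Set.preimage_univ,
    Measure.smul_apply, smul_eq_mul]
  refine ENNReal.inv_mul_cancel ?_ (measure_ne_top _ _)
  rw [Measure.measure_univ_ne_zero]
  exact Measure.toSphere_ne_zero _

theorem integral_uniformBall {d : ℕ} (g : EuclideanSpace ℝ (Fin d) → ℝ) :
    ∫ v, g v ∂(uniformBall d)
      = (volume.real (closedBall (0 : EuclideanSpace ℝ (Fin d)) 1))⁻¹ *
        ∫ v in closedBall 0 1, g v := by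
  rw [uniformBall, integral_smul_measure, ENNReal.toReal_inv, smul_eq_mul]
  rfl

/-- The sphere has surface measure `d` times the volume of the unit ball. -/
theorem integral_uniformSphere {d : ℕ} (g : EuclideanSpace ℝ (Fin d) → ℝ) (hg : Continuous g) :
    ∫ u, g u ∂(uniformSphere d)
      = (d * volume.real (closedBall (0 : EuclideanSpace ℝ (Fin d)) 1))⁻¹ *
        ∫ u : sphere (0 : EuclideanSpace ℝ (Fin d)) 1, g u
          ∂(volume : Measure (EuclideanSpace ℝ (Fin d))).toSphere := by
  rw [uniformSphere, integral_map measurable_subtype_coe.aemeasurable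
    hg.aestronglyMeasurable, integral_smul_measure, ENNReal.toReal_inv, smul_eq_mul]
  congr 2
  rw [Measure.toSphere_apply_univ, finrank_euclideanSpace_fin, ENNReal.toReal_mul,
    ENNReal.toReal_natCast, measureReal_def, Measure.addHaar_unitClosedBall_eq_addHaar_unitBall]

theorem norm_uniformSphere (d : ℕ) : ∀ᵐ u ∂(uniformSphere d), ‖u‖ = 1 := by
  rw [uniformSphere, ae_map_iff measurable_subtype_coe.aemeasurable
    (measurableSet_eq_fun (by fun_prop) (by fun_prop))]
  exact Filter.Eventually.of_forall fun u => by simp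

theorem norm_uniformBall (d : ℕ) : ∀ᵐ v ∂(uniformBall d), ‖v‖ ≤ 1 := by
  have h : ∀ᵐ v ∂(volume.restrict (closedBall (0 : EuclideanSpace ℝ (Fin d)) 1)), ‖v‖ ≤ 1 := by
    filter_upwards [ae_restrict_mem measurableSet_closedBall] with v hv
    simpa using hv
  exact Measure.ae_smul_measure h _

theorem integral_uniformBall_neg {d : ℕ} (g : EuclideanSpace ℝ (Fin d) → ℝ) :
    ∫ v, g (-v) ∂(uniformBall d) = ∫ v, g v ∂(uniformBall d) := by
  rw [integral_uniformBall, integral_uniformBall]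
  congr 1
  have := (Measure.measurePreserving_neg
    (volume : Measure (EuclideanSpace ℝ (Fin d)))).setIntegral_preimage_emb
    (MeasurableEquiv.neg _).measurableEmbedding g (closedBall 0 1)
  simpa using this

/-! ### The smoothed objective -/

/-- The ball average of `∇J` around `x`; it equals the gradient of the smoothed objective. -/
noncomputable def smoothGrad {d : ℕ} (J : EuclideanSpace ℝ (Fin d) → ℝ) (δ : ℝ)
    (x : EuclideanSpace ℝ (Fin d)) : EuclideanSpace ℝ (Fin d) :=
  ∫ v, gradient J (x + δ • v) ∂(uniformBall d)

/-- The `δ`-smoothed objective `Ĵ`. -/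
noncomputable def smoothed {d : ℕ} (J : EuclideanSpace ℝ (Fin d) → ℝ) (δ : ℝ)
    (x : EuclideanSpace ℝ (Fin d)) : ℝ :=
  ∫ v, J (x + δ • v) ∂(uniformBall d)

/-- The two-point gradient estimate at `x` for the sample `z = (u, η⁺, η⁻)`. -/
noncomputable def gradEst {d : ℕ} (J : EuclideanSpace ℝ (Fin d) → ℝ) (δ : ℝ)
    (x : EuclideanSpace ℝ (Fin d)) (z : EuclideanSpace ℝ (Fin d) × ℝ × ℝ) :
    EuclideanSpace ℝ (Fin d) :=
  ((d : ℝ) * ((J (x + δ • z.1) + z.2.1) - (J (x - δ • z.1) + z.2.2)) / (2 * δ)) • z.1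

section
variable {d : ℕ} {J : EuclideanSpace ℝ (Fin d) → ℝ} {G L δ : ℝ}

theorem norm_gradient_le (hG : 0 ≤ G) (hlip : ∀ x y, |J x - J y| ≤ G * ‖x - y‖)
    (x : EuclideanSpace ℝ (Fin d)) : ‖gradient J x‖ ≤ G := by
  have h := norm_fderiv_le_of_lip' ℝ (f := J) (x₀ := x) hG
    (Filter.Eventually.of_forall fun y => by simpa using hlip y x)
  rwa [← toDual_gradient, LinearIsometryEquiv.norm_map] at h

theorem continuous_of_lip {E F : Type*} [SeminormedAddCommGroup E] [SeminormedAddCommGroup F]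
    {f : E → F} {C : ℝ} (h : ∀ x y, ‖f x - f y‖ ≤ C * ‖x - y‖) : Continuous f :=
  (LipschitzWith.of_dist_le' (K := C) fun x y => by
    simpa [dist_eq_norm] using h x y).continuous

theorem integrable_gradient (hG : 0 ≤ G) (hlip : ∀ x y, |J x - J y| ≤ G * ‖x - y‖)
    (hsmooth : ∀ x y, ‖gradient J x - gradient J y‖ ≤ L * ‖x - y‖)
    (x : EuclideanSpace ℝ (Fin d)) :
    Integrable (fun v => gradient J (x + δ • v)) (uniformBall d) := by
  have := uniformBall_isProb d
  have hc : Continuous (gradient J) := continuous_of_lip hsmooth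
  exact Integrable.of_bound (by fun_prop) G
    (Filter.Eventually.of_forall fun v => norm_gradient_le hG hlip _)

theorem integrable_shift {M : ℝ} (hdiff : Differentiable ℝ J) (hbdd : ∀ x, |J x| ≤ M)
    (x : EuclideanSpace ℝ (Fin d)) :
    Integrable (fun v => J (x + δ • v)) (uniformBall d) := by
  have := uniformBall_isProb d
  have hc : Continuous J := hdiff.continuous
  exact Integrable.of_bound (by fun_prop) M (Filter.Eventually.of_forall fun v => hbdd _)

theorem norm_smoothGrad_le (hG : 0 ≤ G) (hlip : ∀ x y, |J x - J y| ≤ G * ‖x - y‖)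
    (x : EuclideanSpace ℝ (Fin d)) : ‖smoothGrad J δ x‖ ≤ G := by
  have := uniformBall_isProb d
  have h := norm_integral_le_of_norm_le_const (μ := uniformBall d)
    (f := fun v => gradient J (x + δ • v)) (C := G)
    (Filter.Eventually.of_forall fun v => norm_gradient_le hG hlip _)
  simpa [smoothGrad] using h

theorem abs_smooth_le {M : ℝ} (hbdd : ∀ x, |J x| ≤ M)
    (x : EuclideanSpace ℝ (Fin d)) : |smoothed J δ x| ≤ M := by
  have := uniformBall_isProb d
  have h := norm_integral_le_of_norm_le_const (μ := uniformBall d)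
    (f := fun v => J (x + δ • v)) (C := M)
    (Filter.Eventually.of_forall fun v => hbdd _)
  simpa [smoothed] using h

theorem continuous_smooth {M : ℝ} (hdiff : Differentiable ℝ J)
    (hlip : ∀ x y, |J x - J y| ≤ G * ‖x - y‖) (hbdd : ∀ x, |J x| ≤ M) :
    Continuous (smoothed J δ) := by
  have := uniformBall_isProb d
  refine continuous_of_lip (C := G) fun x y => ?_
  rw [smoothed, smoothed, ← integral_sub (integrable_shift hdiff hbdd x)
    (integrable_shift hdiff hbdd y)]
  have h := norm_integral_le_of_norm_le_const (μ := uniformBall d)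
    (f := fun v => J (x + δ • v) - J (y + δ • v)) (C := G * ‖x - y‖)
    (Filter.Eventually.of_forall fun v => by simpa using hlip (x + δ • v) (y + δ • v))
  simpa using h

theorem continuous_smoothGrad (hG : 0 ≤ G) (hlip : ∀ x y, |J x - J y| ≤ G * ‖x - y‖)
    (hsmooth : ∀ x y, ‖gradient J x - gradient J y‖ ≤ L * ‖x - y‖) :
    Continuous (smoothGrad J δ) := by
  have := uniformBall_isProb d
  refine continuous_of_lip (C := L) fun x y => ?_
  rw [smoothGrad, smoothGrad, ← integral_sub (integrable_gradient hG hlip hsmooth x)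
    (integrable_gradient hG hlip hsmooth y)]
  have h := norm_integral_le_of_norm_le_const (μ := uniformBall d)
    (f := fun v => gradient J (x + δ • v) - gradient J (y + δ • v)) (C := L * ‖x - y‖)
    (Filter.Eventually.of_forall fun v => by simpa using hsmooth (x + δ • v) (y + δ • v))
  simpa using h

theorem norm_gradient_sub_smoothGrad_le (hG : 0 ≤ G) (hL : 0 ≤ L) (hδ : 0 ≤ δ)
    (hlip : ∀ x y, |J x - J y| ≤ G * ‖x - y‖)
    (hsmooth : ∀ x y, ‖gradient J x - gradient J y‖ ≤ L * ‖x - y‖)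
    (x : EuclideanSpace ℝ (Fin d)) : ‖gradient J x - smoothGrad J δ x‖ ≤ L * δ := by
  have := uniformBall_isProb d
  have h := norm_integral_le_of_norm_le_const (μ := uniformBall d)
    (f := fun v => gradient J x - gradient J (x + δ • v)) (C := L * δ) (by
      filter_upwards [norm_uniformBall d] with v hv
      refine (hsmooth _ _).trans ?_
      rw [sub_add_cancel_left, norm_neg, norm_smul, Real.norm_eq_abs, abs_of_nonneg hδ]
      gcongr
      nlinarith)
  rw [integral_sub (integrable_const _) (integrable_gradient hG hlip hsmooth x)] at h
  simpa [smoothGrad] using h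

/-- The descent lemma for the smoothed objective, obtained by averaging the one for `J`. -/
theorem smooth_descent {M : ℝ} (hG : 0 ≤ G) (hdiff : Differentiable ℝ J)
    (hlip : ∀ x y, |J x - J y| ≤ G * ‖x - y‖)
    (hsmooth : ∀ x y, ‖gradient J x - gradient J y‖ ≤ L * ‖x - y‖) (hbdd : ∀ x, |J x| ≤ M)
    (x h : EuclideanSpace ℝ (Fin d)) :
    smoothed J δ (x + h) ≤ smoothed J δ x + inner ℝ (smoothGrad J δ x) h + L / 2 * ‖h‖ ^ 2 := by
  have := uniformBall_isProb d
  have hg := integrable_gradient (δ := δ) hG hlip hsmooth x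
  have hgi : Integrable (fun v => inner ℝ h (gradient J (x + δ • v))) (uniformBall d) :=
    hg.const_inner h
  have hi : inner ℝ (smoothGrad J δ x) h = ∫ v, inner ℝ h (gradient J (x + δ • v))
      ∂(uniformBall d) := by
    rw [real_inner_comm, smoothGrad, integral_inner hg]
  have hJ := integrable_shift (δ := δ) hdiff hbdd x
  have hconst : L / 2 * ‖h‖ ^ 2 = ∫ _v, L / 2 * ‖h‖ ^ 2 ∂(uniformBall d) := by simp
  have hJg : Integrable (fun v => J (x + δ • v) + inner ℝ h (gradient J (x + δ • v)))
      (uniformBall d) := hJ.add hgi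
  rw [hi, smoothed, smoothed, hconst, ← integral_add hJ hgi,
    ← integral_add hJg (integrable_const _)]
  refine integral_mono (integrable_shift hdiff hbdd _)
    (hJg.add (integrable_const _)) fun v => ?_
  have := descent_lemma hdiff hsmooth (x + δ • v) h
  rw [add_right_comm, real_inner_comm] at this
  exact this

/-- A step of length `1 / L` along `-D x` would otherwise decrease the smoothed objective by
`‖D x‖² / (2L)`. -/
theorem smoothGrad_eq_zero_of_isMin {M : ℝ} (hG : 0 ≤ G) (hL : 0 < L) (hdiff : Differentiable ℝ J)
    (hlip : ∀ x y, |J x - J y| ≤ G * ‖x - y‖)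
    (hsmooth : ∀ x y, ‖gradient J x - gradient J y‖ ≤ L * ‖x - y‖) (hbdd : ∀ x, |J x| ≤ M)
    {x : EuclideanSpace ℝ (Fin d)} (hmin : ∀ y, smoothed J δ x ≤ smoothed J δ y) :
    smoothGrad J δ x = 0 := by
  have h1 := smooth_descent (δ := δ) hG hdiff hlip hsmooth hbdd x
    (-(L⁻¹ • smoothGrad J δ x))
  have h2 := hmin (x + -(L⁻¹ • smoothGrad J δ x))
  rw [inner_neg_right, real_inner_smul_right, norm_neg, norm_smul, mul_pow,
    Real.norm_eq_abs, sq_abs, real_inner_self_eq_norm_sq] at h1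
  have h3 : L / 2 * (L⁻¹ ^ 2 * ‖smoothGrad J δ x‖ ^ 2)
      = L⁻¹ / 2 * ‖smoothGrad J δ x‖ ^ 2 := by field_simp
  have h4 : L⁻¹ / 2 * ‖smoothGrad J δ x‖ ^ 2 ≤ 0 := by linarith
  have hLi : 0 < L⁻¹ / 2 := by positivity
  have h5 : ‖smoothGrad J δ x‖ ^ 2 ≤ 0 := by
    by_contra hne
    push Not at hne
    nlinarith [mul_pos hLi hne]
  exact norm_eq_zero.1 (pow_eq_zero_iff two_ne_zero |>.1 (le_antisymm h5 (sq_nonneg _)))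

/-- The spherical two-point formula for the smoothed gradient, in the direction `e`.
Because `v ↦ J (x + δ v) - J (x - δ v)` is odd, its directional derivative is even and both halves
have the same ball average. -/
theorem sphere_identity (hd : 1 ≤ d) (hG : 0 ≤ G) (hδ : 0 ≤ δ) (hdiff : Differentiable ℝ J)
    (hlip : ∀ x y, |J x - J y| ≤ G * ‖x - y‖)
    (hsmooth : ∀ x y, ‖gradient J x - gradient J y‖ ≤ L * ‖x - y‖)
    (x e : EuclideanSpace ℝ (Fin d)) :
    d * ∫ u, (J (x + δ • u) - J (x - δ • u)) * inner ℝ u e ∂(uniformSphere d)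
      = 2 * δ * inner ℝ (smoothGrad J δ x) e := by
  have := uniformBall_isProb d
  have hgc : Continuous (gradient J) := continuous_of_lip hsmooth
  have hJc : Continuous J := hdiff.continuous
  set F : EuclideanSpace ℝ (Fin d) → ℝ := fun v => J (x + δ • v) - J (x + (-δ) • v) with hF
  have hFd : ∀ v, lineDeriv ℝ F v e = δ * inner ℝ (gradient J (x + δ • v)) e
      + δ * inner ℝ (gradient J (x + δ • (-v))) e := by
    intro v
    have h1 := gradient_lineDeriv hdiff δ x v e
    have h2 := gradient_lineDeriv hdiff (-δ) x v e
    have h3 : HasLineDerivAt ℝ F _ v e := HasDerivAt.sub h1 h2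
    rw [h3.lineDeriv, smul_neg, neg_smul]
    ring
  have hFl : LipschitzWith (Real.toNNReal (2 * G * δ)) F := by
    refine LipschitzWith.of_dist_le' fun v w => ?_
    have h1 := hlip (x + δ • v) (x + δ • w)
    have h2 := hlip (x + (-δ) • w) (x + (-δ) • v)
    rw [add_sub_add_left_eq_sub, ← smul_sub, norm_smul, Real.norm_eq_abs, abs_of_nonneg hδ] at h1
    rw [add_sub_add_left_eq_sub, ← smul_sub, norm_smul, Real.norm_eq_abs, abs_neg,
      abs_of_nonneg hδ, norm_sub_rev] at h2
    rw [Real.dist_eq, dist_eq_norm]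
    calc |F v - F w| = |(J (x + δ • v) - J (x + δ • w)) +
          (J (x + (-δ) • w) - J (x + (-δ) • v))| := by simp only [hF]; ring_nf
      _ ≤ _ := abs_add_le _ _
      _ ≤ _ := by linarith
  have hdiv := divergence_ball hd F hFl e (by simp only [hFd]; fun_prop)
  have hS := integral_uniformSphere (fun u => F u * inner ℝ u e) (by fun_prop)
  have hB := integral_uniformBall (fun v => lineDeriv ℝ F v e)
  have hgi : Integrable (fun v => inner ℝ (gradient J (x + δ • v)) e) (uniformBall d) :=
    (integrable_gradient hG hlip hsmooth x).inner_const e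
  have hgi' : Integrable (fun v => inner ℝ (gradient J (x + δ • -v)) e) (uniformBall d) := by
    have := (integrable_gradient (δ := -δ) hG hlip hsmooth x).inner_const (𝕜 := ℝ) e
    simpa using this
  have hi : inner ℝ (smoothGrad J δ x) e = ∫ v, inner ℝ (gradient J (x + δ • v)) e
      ∂(uniformBall d) := by
    rw [real_inner_comm, smoothGrad, ← integral_inner (integrable_gradient hG hlip hsmooth x)]
    simp only [real_inner_comm]
  have hB2 : ∫ v, lineDeriv ℝ F v e ∂(uniformBall d) = 2 * δ * inner ℝ (smoothGrad J δ x) e := by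
    simp only [hFd]
    rw [integral_add (hgi.const_mul _) (hgi'.const_mul _), integral_const_mul, integral_const_mul,
      integral_uniformBall_neg (fun v => inner ℝ (gradient J (x + δ • v)) e), hi]
    ring
  have hFe : (fun u : EuclideanSpace ℝ (Fin d) => (J (x + δ • u) - J (x - δ • u)) * inner ℝ u e)
      = fun u => F u * inner ℝ u e := by
    funext u
    simp only [hF, neg_smul, sub_eq_add_neg]
  have hd0 : (d : ℝ) ≠ 0 := by positivity
  rw [hFe, hS, ← hdiv, ← hB2, hB, mul_inv, ← mul_assoc, ← mul_assoc, mul_inv_cancel₀ hd0, one_mul]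

/-! ### One round of the algorithm -/

/-- The two-point estimator is an unbiased estimator of the smoothed gradient, tested against a
vector `e`. The noise enters only through `η⁺ - η⁻`, which is centred since both noises have the
same law. -/
theorem integral_inner_gradEst {ν : Measure ℝ} [IsProbabilityMeasure ν] {M : ℝ} (hd : 1 ≤ d)
    (hG : 0 ≤ G) (hδ : 0 < δ) (hdiff : Differentiable ℝ J)
    (hlip : ∀ x y, |J x - J y| ≤ G * ‖x - y‖)
    (hsmooth : ∀ x y, ‖gradient J x - gradient J y‖ ≤ L * ‖x - y‖) (hbdd : ∀ x, |J x| ≤ M)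
    (hνint1 : Integrable (fun x : ℝ => x) ν) (x e : EuclideanSpace ℝ (Fin d)) :
    Integrable (fun z => inner ℝ (gradEst J δ x z) e) ((uniformSphere d).prod (ν.prod ν)) ∧
    ∫ z, inner ℝ (gradEst J δ x z) e ∂((uniformSphere d).prod (ν.prod ν))
      = inner ℝ (smoothGrad J δ x) e := by
  have := uniformSphere_isProb hd
  have hJc : Continuous J := hdiff.continuous
  set F : EuclideanSpace ℝ (Fin d) → ℝ :=
    fun u => (J (x + δ • u) - J (x - δ • u)) * inner ℝ u e with hF
  have hui : Integrable (fun u : EuclideanSpace ℝ (Fin d) => (inner ℝ u e : ℝ))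
      (uniformSphere d) := by
    refine Integrable.of_bound (by fun_prop) ‖e‖ ?_
    filter_upwards [norm_uniformSphere d] with u hu
    simpa [hu] using norm_inner_le_norm (𝕜 := ℝ) u e
  have hFi : Integrable F (uniformSphere d) := by
    refine hui.bdd_mul (c := 2 * M) (by fun_prop) (Filter.Eventually.of_forall fun u => ?_)
    refine (abs_sub _ _).trans ?_
    linarith [hbdd (x + δ • u), hbdd (x - δ • u)]
  have hwi : Integrable (fun w : ℝ × ℝ => w.1 - w.2) (ν.prod ν) :=
    (hνint1.comp_fst ν).sub (hνint1.comp_snd ν)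
  have hw0 : ∫ w : ℝ × ℝ, w.1 - w.2 ∂(ν.prod ν) = 0 := by
    rw [integral_sub (hνint1.comp_fst ν) (hνint1.comp_snd ν),
      integral_fun_fst (fun x : ℝ => x), integral_fun_snd (fun x : ℝ => x)]
    simp
  have heq : (fun z : EuclideanSpace ℝ (Fin d) × ℝ × ℝ => (inner ℝ (gradEst J δ x z) e : ℝ))
      = fun z => d / (2 * δ) * F z.1
        + d / (2 * δ) * ((inner ℝ z.1 e : ℝ) * (z.2.1 - z.2.2)) := by
    funext z
    simp only [gradEst, hF, real_inner_smul_left]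
    ring
  have h1 : Integrable (fun z : EuclideanSpace ℝ (Fin d) × ℝ × ℝ => d / (2 * δ) * F z.1)
      ((uniformSphere d).prod (ν.prod ν)) := (hFi.comp_fst _).const_mul _
  have h2 : Integrable (fun z : EuclideanSpace ℝ (Fin d) × ℝ × ℝ =>
      d / (2 * δ) * ((inner ℝ z.1 e : ℝ) * (z.2.1 - z.2.2)))
      ((uniformSphere d).prod (ν.prod ν)) := (hui.mul_prod hwi).const_mul _
  rw [heq]
  refine ⟨h1.add h2, ?_⟩
  rw [integral_add h1 h2, integral_const_mul, integral_const_mul, integral_fun_fst F,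
    integral_prod_mul (fun u : EuclideanSpace ℝ (Fin d) => (inner ℝ u e : ℝ))
      (fun w : ℝ × ℝ => w.1 - w.2), hw0]
  have hs := sphere_identity hd hG hδ.le hdiff hlip hsmooth x e
  simp only [probReal_univ, one_smul, mul_zero, add_zero]
  rw [div_mul_eq_mul_div, hs]
  field_simp

/-- Pointwise form of the second-moment bound. The noise difference is estimated by
`(η⁺ - η⁻)² ≤ 2(η⁺)² + 2(η⁻)²`, so that no cross terms appear. -/
theorem norm_gradEst_sq_le (hδ : 0 < δ) (hlip : ∀ x y, |J x - J y| ≤ G * ‖x - y‖)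
    (x : EuclideanSpace ℝ (Fin d)) (z : EuclideanSpace ℝ (Fin d) × ℝ × ℝ) (hz : ‖z.1‖ = 1) :
    ‖gradEst J δ x z‖ ^ 2 ≤
      2 * d ^ 2 * G ^ 2 + d ^ 2 / δ ^ 2 * (z.2.1 ^ 2 + z.2.2 ^ 2) := by
  have h1 : |J (x + δ • z.1) - J (x - δ • z.1)| ≤ 2 * δ * G := by
    refine (hlip _ _).trans_eq ?_
    have : x + δ • z.1 - (x - δ • z.1) = (2 * δ) • z.1 := by rw [mul_smul, two_smul]; abel
    rw [this, norm_smul, hz, Real.norm_eq_abs, abs_of_pos (by positivity)]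
    ring
  have h2 : (J (x + δ • z.1) - J (x - δ • z.1)) ^ 2 ≤ (2 * δ * G) ^ 2 :=
    sq_le_sq' (by linarith [abs_le.1 h1]) (le_of_abs_le h1)
  rw [gradEst, norm_smul, hz, mul_one, Real.norm_eq_abs, sq_abs]
  set A := J (x + δ • z.1)
  set B := J (x - δ • z.1)
  have h3 : ((A + z.2.1) - (B + z.2.2)) ^ 2 ≤
      8 * δ ^ 2 * G ^ 2 + 4 * (z.2.1 ^ 2 + z.2.2 ^ 2) := by
    nlinarith [sq_nonneg (A - B - (z.2.1 - z.2.2)), sq_nonneg (z.2.1 + z.2.2)]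
  calc (d * ((A + z.2.1) - (B + z.2.2)) / (2 * δ)) ^ 2
      = d ^ 2 / (4 * δ ^ 2) * ((A + z.2.1) - (B + z.2.2)) ^ 2 := by ring
    _ ≤ d ^ 2 / (4 * δ ^ 2) * (8 * δ ^ 2 * G ^ 2 + 4 * (z.2.1 ^ 2 + z.2.2 ^ 2)) := by gcongr
    _ = _ := by field_simp; ring

/-- Expected decrease of the smoothed objective in one round started at the fixed point `x`. -/
theorem one_step {ν : Measure ℝ} [IsProbabilityMeasure ν] {M σ α : ℝ} (hd : 1 ≤ d)
    (hG : 0 ≤ G) (hL : 0 ≤ L) (hδ : 0 < δ) (hdiff : Differentiable ℝ J)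
    (hlip : ∀ x y, |J x - J y| ≤ G * ‖x - y‖)
    (hsmooth : ∀ x y, ‖gradient J x - gradient J y‖ ≤ L * ‖x - y‖) (hbdd : ∀ x, |J x| ≤ M)
    (hνint1 : Integrable (fun x : ℝ => x) ν) (hνint2 : Integrable (fun x : ℝ => x ^ 2) ν)
    (hνvar : ∫ x, x ^ 2 ∂ν = σ ^ 2) (x : EuclideanSpace ℝ (Fin d)) :
    ∫ z, smoothed J δ (x - α • gradEst J δ x z) ∂((uniformSphere d).prod (ν.prod ν))
      ≤ smoothed J δ x - α * ‖smoothGrad J δ x‖ ^ 2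
        + L / 2 * α ^ 2 * (2 * d ^ 2 * G ^ 2 + 2 * d ^ 2 * σ ^ 2 / δ ^ 2) := by
  have := uniformSphere_isProb hd
  have hJc : Continuous J := hdiff.continuous
  have hsc : Continuous (smoothed J δ) := continuous_smooth hdiff hlip hbdd
  have hgc : Continuous (gradEst J δ x) := by unfold gradEst; fun_prop
  obtain ⟨hgi, hge⟩ := integral_inner_gradEst (ν := ν) hd hG hδ hdiff hlip hsmooth hbdd hνint1 x
    (smoothGrad J δ x)
  set P := (uniformSphere d).prod (ν.prod ν)
  have hqi : Integrable (fun w : ℝ × ℝ => w.1 ^ 2 + w.2 ^ 2) (ν.prod ν) :=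
    (hνint2.comp_fst ν).add (hνint2.comp_snd ν)
  have hq : ∫ w : ℝ × ℝ, w.1 ^ 2 + w.2 ^ 2 ∂(ν.prod ν) = 2 * σ ^ 2 := by
    rw [integral_add (hνint2.comp_fst ν) (hνint2.comp_snd ν),
      integral_fun_fst (fun x : ℝ => x ^ 2), integral_fun_snd (fun x : ℝ => x ^ 2), hνvar]
    simp
    ring
  have hQi : Integrable (fun z : EuclideanSpace ℝ (Fin d) × ℝ × ℝ => z.2.1 ^ 2 + z.2.2 ^ 2) P :=
    hqi.comp_snd (uniformSphere d)
  have hQ : ∫ z : EuclideanSpace ℝ (Fin d) × ℝ × ℝ, z.2.1 ^ 2 + z.2.2 ^ 2 ∂P = 2 * σ ^ 2 := by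
    rw [integral_fun_snd (fun w : ℝ × ℝ => w.1 ^ 2 + w.2 ^ 2), hq]
    simp
  have hI1 : Integrable (fun z => smoothed J δ x
      - α * inner ℝ (gradEst J δ x z) (smoothGrad J δ x)) P :=
    (integrable_const _).sub (hgi.const_mul α)
  have hI2 : Integrable (fun z : EuclideanSpace ℝ (Fin d) × ℝ × ℝ => L / 2 * α ^ 2 *
      (2 * d ^ 2 * G ^ 2 + d ^ 2 / δ ^ 2 * (z.2.1 ^ 2 + z.2.2 ^ 2))) P :=
    ((integrable_const _).add (hQi.const_mul _)).const_mul _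
  have hle : ∫ z, smoothed J δ (x - α • gradEst J δ x z) ∂P ≤
      ∫ z, ((smoothed J δ x - α * inner ℝ (gradEst J δ x z) (smoothGrad J δ x))
        + L / 2 * α ^ 2 * (2 * d ^ 2 * G ^ 2 + d ^ 2 / δ ^ 2 * (z.2.1 ^ 2 + z.2.2 ^ 2))) ∂P := by
    refine integral_mono_ae ?_ (hI1.add hI2) ?_
    · exact Integrable.of_bound (by fun_prop) M
        (Filter.Eventually.of_forall fun v => abs_smooth_le hbdd _)
    · filter_upwards [Measure.quasiMeasurePreserving_fst.ae (norm_uniformSphere d)] with z hz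
      have h1 := smooth_descent (δ := δ) hG hdiff hlip hsmooth hbdd x (-(α • gradEst J δ x z))
      rw [← sub_eq_add_neg, inner_neg_right, real_inner_smul_right, norm_neg, norm_smul, mul_pow,
        Real.norm_eq_abs, sq_abs, real_inner_comm] at h1
      have h2 := norm_gradEst_sq_le hδ hlip x z hz
      have h3 := mul_le_mul_of_nonneg_left h2 (show 0 ≤ L / 2 * α ^ 2 by positivity)
      linarith
  have hQ' : ∫ z : EuclideanSpace ℝ (Fin d) × ℝ × ℝ,
      (d : ℝ) ^ 2 / δ ^ 2 * (z.2.1 ^ 2 + z.2.2 ^ 2) ∂P = d ^ 2 / δ ^ 2 * (2 * σ ^ 2) := by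
    rw [integral_const_mul, hQ]
  refine hle.trans_eq ?_
  rw [integral_add hI1 hI2, integral_sub (integrable_const _) (hgi.const_mul α),
    integral_const_mul, hge, integral_const_mul,
    integral_add (integrable_const _) (hQi.const_mul _), hQ',
    real_inner_self_eq_norm_sq]
  simp
  left
  ring
end

/-! ### Averaging over the rounds -/

/-- Resampling one coordinate of an i.i.d. family independently does not change its law. -/
theorem measurePreserving_update {ι X : Type*} [Fintype ι] [DecidableEq ι] [MeasurableSpace X]
    (P : Measure X) [IsProbabilityMeasure P] (i : ι) :
    MeasurePreserving (fun p : (ι → X) × X => Function.update p.1 i p.2)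
      ((Measure.pi fun _ : ι => P).prod P) (Measure.pi fun _ : ι => P) := by
  have hm : Measurable (fun p : (ι → X) × X => Function.update p.1 i p.2) := measurable_update'
  refine ⟨hm, (Measure.pi_eq fun s hs => ?_).symm⟩
  rw [Measure.map_apply hm (MeasurableSet.univ_pi hs)]
  have hpre : (fun p : (ι → X) × X => Function.update p.1 i p.2) ⁻¹' (Set.univ.pi s)
      = (Set.univ.pi (Function.update s i Set.univ)) ×ˢ s i := by
    ext ⟨ω, z⟩
    simp only [Set.mem_preimage, Set.mem_pi, Set.mem_univ, true_imp_iff, Set.mem_prod]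
    constructor
    · intro h
      refine ⟨fun j => ?_, by simpa using h i⟩
      by_cases hj : j = i
      · subst hj; simp
      · simpa [hj] using h j
    · rintro ⟨h1, h2⟩ j
      by_cases hj : j = i
      · subst hj; simpa using h2
      · simpa [hj] using h1 j
  rw [hpre, Measure.prod_prod, Measure.pi_pi, ← Finset.mul_prod_erase _ _ (Finset.mem_univ i),
    ← Finset.mul_prod_erase Finset.univ (fun j => P (s j)) (Finset.mem_univ i)]
  rw [Function.update_self, measure_univ, one_mul, mul_comm]
  congr 1
  refine Finset.prod_congr rfl fun j hj => ?_
  rw [Function.update_of_ne (Finset.ne_of_mem_erase hj)]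

/-- The tuned step size satisfies `α² L T W = 2Δ₀`, so both terms of the telescoped bound are at most
`Δ₀`, while `α √(2Δ₀LW) √T = 2Δ₀`. -/
theorem sum_le_of_tuned_step {L T W V Δ₀ α B : ℝ} (hL : 0 < L) (hT : 0 < T) (hW : 0 < W)
    (hΔ : 0 ≤ Δ₀) (hVW : V ≤ W) (hα : α = Real.sqrt (2 * Δ₀ / (L * T * W))) (hαpos : 0 < α)
    (hB : α * B ≤ Δ₀ + T * (L / 2 * α ^ 2 * V)) :
    B ≤ Real.sqrt (2 * Δ₀ * L * W) * Real.sqrt T := by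
  have hα2 : α ^ 2 * (L * T * W) = 2 * Δ₀ := by
    rw [hα, Real.sq_sqrt (by positivity)]
    field_simp
  have hsα : α * (Real.sqrt (2 * Δ₀ * L * W) * Real.sqrt T) = 2 * Δ₀ := by
    have h : 2 * Δ₀ / (L * T * W) * (2 * Δ₀ * L * W * T) = (2 * Δ₀) ^ 2 := by field_simp
    rw [hα, ← Real.sqrt_mul (by positivity), ← Real.sqrt_mul (by positivity), h,
      Real.sqrt_sq (by positivity)]
  have h1 : T * (L / 2 * α ^ 2 * V) ≤ Δ₀ := by
    have : T * (L / 2 * α ^ 2 * V) ≤ T * (L / 2 * α ^ 2 * W) := by gcongr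
    linarith
  exact le_of_mul_le_mul_left (by linarith) hαpos

/-- The `i`-th iterate is determined by the samples of the rounds before `i`. -/
theorem iterate_congr {X E : Type*} {T : ℕ} {θ : ℕ → (Fin T → X) → E} {step : E → X → E} {θ₀ : E}
    (hθ0 : ∀ ω, θ 0 ω = θ₀)
    (hupd : ∀ i, ∀ hi : i < T, ∀ ω, θ (i + 1) ω = step (θ i ω) (ω ⟨i, hi⟩))
    (i : ℕ) (hi : i ≤ T) (ω ω' : Fin T → X) (h : ∀ j : Fin T, j.1 < i → ω j = ω' j) :
    θ i ω = θ i ω' := by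
  induction i with
  | zero => rw [hθ0, hθ0]
  | succ i ih =>
    rw [hupd i hi, hupd i hi, ih (by omega) fun j hj => h j (by omega), h ⟨i, hi⟩ (by simp)]

/-- A one-step bound valid from every fixed starting point holds in expectation along the iterates:
the sample of round `i` is independent of `θ i`. -/
theorem expected_step {X E : Type*} [MeasurableSpace X] [TopologicalSpace E] [MeasurableSpace E]
    [BorelSpace E] {T : ℕ} (P : Measure X) [IsProbabilityMeasure P]
    {θ : ℕ → (Fin T → X) → E} (hθmeas : ∀ i, Measurable (θ i)) {step : E → X → E} {θ₀ : E}
    (hθ0 : ∀ ω, θ 0 ω = θ₀)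
    (hupd : ∀ i, ∀ hi : i < T, ∀ ω, θ (i + 1) ω = step (θ i ω) (ω ⟨i, hi⟩))
    {f g : E → ℝ} {Cf Cg : ℝ} (hf : Continuous f) (hfb : ∀ x, |f x| ≤ Cf)
    (hg : Continuous g) (hgb : ∀ x, |g x| ≤ Cg)
    (hstep : ∀ x, ∫ z, f (step x z) ∂P ≤ g x) (i : ℕ) (hi : i < T) :
    ∫ ω, f (θ (i + 1) ω) ∂(Measure.pi fun _ : Fin T => P)
      ≤ ∫ ω, g (θ i ω) ∂(Measure.pi fun _ : Fin T => P) := by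
  set Q := Measure.pi fun _ : Fin T => P
  have hmp := measurePreserving_update P (⟨i, hi⟩ : Fin T)
  have hfm : Measurable fun ω => f (θ (i + 1) ω) := hf.measurable.comp (hθmeas _)
  have hgm : Measurable fun ω => g (θ i ω) := hg.measurable.comp (hθmeas _)
  have hint : Integrable (fun p : (Fin T → X) × X =>
      f (θ (i + 1) (Function.update p.1 ⟨i, hi⟩ p.2))) (Q.prod P) :=
    Integrable.of_bound (hfm.comp hmp.measurable).aestronglyMeasurable Cf
      (Filter.Eventually.of_forall fun p => hfb _)
  have hupd' : ∀ ω z, θ (i + 1) (Function.update ω ⟨i, hi⟩ z) = step (θ i ω) z := by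
    intro ω z
    rw [hupd i hi, Function.update_self, iterate_congr hθ0 hupd i hi.le _ ω fun j hj =>
      Function.update_of_ne (fun h => by simp [h] at hj) _ _]
  calc ∫ ω, f (θ (i + 1) ω) ∂Q
      = ∫ p, f (θ (i + 1) (Function.update p.1 ⟨i, hi⟩ p.2)) ∂(Q.prod P) := by
        have hm := integral_map (μ := Q.prod P) (f := fun ω => f (θ (i + 1) ω))
          hmp.measurable.aemeasurable hfm.aestronglyMeasurable
        rw [hmp.map_eq] at hm
        exact hm
    _ = ∫ ω, ∫ z, f (θ (i + 1) (Function.update ω ⟨i, hi⟩ z)) ∂P ∂Q := integral_prod _ hint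
    _ ≤ _ := by
        refine integral_mono hint.integral_prod_left
          (Integrable.of_bound hgm.aestronglyMeasurable Cg
            (Filter.Eventually.of_forall fun p => hgb _)) fun ω => ?_
        simp only [hupd']
        exact hstep _

/-- guarantee for the two-point zeroth-order SGD with the tuned step size.
The algorithm's randomness at each round is a triple `(u, η⁺, η⁻)` consisting of a uniform
point of the unit sphere and two independent zero-mean noises of variance `σ²` distributed
according to `ν`, i.i.d. across the `T` rounds (product measure). -/
theorem two_point_zeroth_order_sgd_bound (d T : ℕ) (hd : 1 ≤ d) (hT : 1 ≤ T)
    (G L σ δ α M Δ₀ V : ℝ) (hG : 0 ≤ G) (hL : 0 < L) (hσ : 0 ≤ σ) (hδ : 0 < δ)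
    (J : EuclideanSpace ℝ (Fin d) → ℝ)
    (hdiff : Differentiable ℝ J)
    (hlip : ∀ x y, |J x - J y| ≤ G * ‖x - y‖)
    (hsmooth : ∀ x y, ‖gradient J x - gradient J y‖ ≤ L * ‖x - y‖)
    (hbdd : ∀ x, |J x| ≤ M)
    (θ₀ : EuclideanSpace ℝ (Fin d))
    (hΔ₀ : Δ₀ = (∫ v, J (θ₀ + δ • v) ∂(uniformBall d)) -
      ⨅ θ : EuclideanSpace ℝ (Fin d), ∫ v, J (θ + δ • v) ∂(uniformBall d))
    (hV : V = 2 * d ^ 2 * G ^ 2 + 2 * d ^ 2 * σ ^ 2 / δ ^ 2)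
    (hα : α = Real.sqrt (2 * Δ₀ / (L * T * (V + G ^ 2))))
    (ν : Measure ℝ) (hν : IsProbabilityMeasure ν)
    (hνint1 : Integrable (fun x : ℝ => x) ν) (hνint2 : Integrable (fun x : ℝ => x ^ 2) ν)
    (hνmean : ∫ x, x ∂ν = 0) (hνvar : ∫ x, x ^ 2 ∂ν = σ ^ 2)
    (θ : ℕ → (Fin T → EuclideanSpace ℝ (Fin d) × ℝ × ℝ) → EuclideanSpace ℝ (Fin d))
    (hθmeas : ∀ i, Measurable (θ i))
    (hθ0 : ∀ ω, θ 0 ω = θ₀)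
    (hupd : ∀ i, ∀ hi : i < T, ∀ ω, θ (i + 1) ω = θ i ω -
      α • (((d : ℝ) * ((J (θ i ω + δ • (ω ⟨i, hi⟩).1) + (ω ⟨i, hi⟩).2.1)
          - (J (θ i ω - δ • (ω ⟨i, hi⟩).1) + (ω ⟨i, hi⟩).2.2)) / (2 * δ)) • (ω ⟨i, hi⟩).1)) :
    (1 / (T : ℝ)) * ∑ i ∈ Finset.range T,
        ∫ ω, ‖gradient J (θ i ω)‖ ^ 2
          ∂(Measure.pi fun _ : Fin T => (uniformSphere d).prod (ν.prod ν))
      ≤ 2 * L ^ 2 * δ ^ 2 + 4 * Real.sqrt (2 * Δ₀ * L * (V + G ^ 2)) / Real.sqrt T := by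
  have := uniformSphere_isProb hd
  have hTpos : (0 : ℝ) < T := by exact_mod_cast hT
  set P := (uniformSphere d).prod (ν.prod ν)
  set Q := Measure.pi fun _ : Fin T => P
  set W := V + G ^ 2 with hW
  have hVnn : 0 ≤ V := by rw [hV]; positivity
  have hWnn : 0 ≤ W := by positivity
  have hinf : ∀ x, (⨅ y, smoothed J δ y) ≤ smoothed J δ x := fun x =>
    ciInf_le ⟨-M, by rintro _ ⟨y, rfl⟩; exact (abs_le.1 (abs_smooth_le hbdd y)).1⟩ x
  have hΔ : Δ₀ = smoothed J δ θ₀ - ⨅ y, smoothed J δ y := hΔ₀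
  have hΔnn : 0 ≤ Δ₀ := by rw [hΔ]; linarith [hinf θ₀]
  have hupd' : ∀ i, ∀ hi : i < T, ∀ ω, θ (i + 1) ω =
      (fun x z => x - α • gradEst J δ x z) (θ i ω) (ω ⟨i, hi⟩) := hupd
  have hsc : Continuous (smoothed J δ) := continuous_smooth hdiff hlip hbdd
  have hDc : Continuous (smoothGrad J δ) := continuous_smoothGrad hG hlip hsmooth
  have hgc : Continuous (gradient J) := continuous_of_lip hsmooth
  have hDb : ∀ x, ‖smoothGrad J δ x‖ ^ 2 ≤ G ^ 2 := fun x =>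
    pow_le_pow_left₀ (norm_nonneg _) (norm_smoothGrad_le hG hlip x) 2
  set b : ℕ → ℝ := fun i => ∫ ω, ‖smoothGrad J δ (θ i ω)‖ ^ 2 ∂Q with hb
  set a : ℕ → ℝ := fun i => ∫ ω, smoothed J δ (θ i ω) ∂Q with ha
  have hai : ∀ i, Integrable (fun ω => smoothed J δ (θ i ω)) Q := fun i =>
    Integrable.of_bound (hsc.measurable.comp (hθmeas i)).aestronglyMeasurable M
      (Filter.Eventually.of_forall fun ω => abs_smooth_le hbdd _)
  have hbi : ∀ i, Integrable (fun ω => ‖smoothGrad J δ (θ i ω)‖ ^ 2) Q := fun i =>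
    Integrable.of_bound ((hDc.norm.pow 2).measurable.comp (hθmeas i)).aestronglyMeasurable (G ^ 2)
      (Filter.Eventually.of_forall fun ω => by
        rw [Real.norm_eq_abs, abs_of_nonneg (by positivity)]; exact hDb _)
  have hgi : ∀ i, Integrable (fun ω => ‖gradient J (θ i ω)‖ ^ 2) Q := fun i =>
    Integrable.of_bound ((hgc.norm.pow 2).measurable.comp (hθmeas i)).aestronglyMeasurable (G ^ 2)
      (Filter.Eventually.of_forall fun ω => by
        rw [Real.norm_eq_abs, abs_of_nonneg (by positivity)]
        exact pow_le_pow_left₀ (norm_nonneg _) (norm_gradient_le hG hlip _) 2)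
  have hstep : ∀ i, i < T → a (i + 1) ≤ a i - α * b i + L / 2 * α ^ 2 * V := by
    intro i hi
    have h := expected_step P hθmeas hθ0 hupd' (f := smoothed J δ)
      (g := fun x => smoothed J δ x - α * ‖smoothGrad J δ x‖ ^ 2 + L / 2 * α ^ 2 * V)
      (Cf := M) (Cg := M + |α| * G ^ 2 + |L / 2 * α ^ 2 * V|) hsc (abs_smooth_le hbdd)
      (by fun_prop) (fun x => by
        refine (abs_add_le _ _).trans (add_le_add_left ((abs_sub _ _).trans
          (add_le_add (abs_smooth_le hbdd x) ?_)) _)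
        rw [abs_mul, abs_of_nonneg (sq_nonneg ‖smoothGrad J δ x‖)]
        exact mul_le_mul_of_nonneg_left (hDb x) (abs_nonneg α))
      (fun x => by
        rw [hV]
        exact one_step hd hG hL.le hδ hdiff hlip hsmooth hbdd hνint1 hνint2 hνvar x) i hi
    refine h.trans_eq ?_
    have habi : Integrable (fun ω => smoothed J δ (θ i ω) - α * ‖smoothGrad J δ (θ i ω)‖ ^ 2) Q :=
      (hai i).sub ((hbi i).const_mul α)
    have hc : ∫ _ω, L / 2 * α ^ 2 * V ∂Q = L / 2 * α ^ 2 * V := by simp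
    refine (integral_add habi (integrable_const _)).trans ?_
    rw [integral_sub (hai i) ((hbi i).const_mul α), integral_const_mul, hc]
  have hsum : ∀ n, n ≤ T → α * ∑ i ∈ Finset.range n, b i
      ≤ a 0 - a n + n * (L / 2 * α ^ 2 * V) := by
    intro n
    induction n with
    | zero => intro _; simp
    | succ n ih =>
      intro hn
      have h1 := ih (by omega)
      have h2 := hstep n hn
      rw [Finset.sum_range_succ]
      push_cast
      linarith
  have ha0 : a 0 = smoothed J δ θ₀ := by simp [ha, hθ0]
  have haT : (⨅ y, smoothed J δ y) ≤ a T := by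
    have := integral_mono (μ := Q) (integrable_const (⨅ y, smoothed J δ y)) (hai T)
      fun ω => hinf (θ T ω)
    simpa using this
  have hmain : α * ∑ i ∈ Finset.range T, b i ≤ Δ₀ + T * (L / 2 * α ^ 2 * V) := by
    have := hsum T le_rfl
    linarith
  have hgb : ∀ i, ∫ ω, ‖gradient J (θ i ω)‖ ^ 2 ∂Q ≤ 2 * b i + 2 * L ^ 2 * δ ^ 2 := by
    intro i
    have h := integral_mono (hgi i) (((hbi i).const_mul 2).add
      (integrable_const (2 * L ^ 2 * δ ^ 2))) fun ω => by
        have h1 := norm_gradient_sub_smoothGrad_le hG hL.le hδ.le hlip hsmooth (θ i ω)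
        have h2 : ‖gradient J (θ i ω)‖ ≤ ‖smoothGrad J δ (θ i ω)‖ + L * δ := by
          linarith [norm_le_norm_add_norm_sub' (gradient J (θ i ω)) (smoothGrad J δ (θ i ω))]
        show ‖gradient J (θ i ω)‖ ^ 2 ≤ 2 * ‖smoothGrad J δ (θ i ω)‖ ^ 2 + 2 * L ^ 2 * δ ^ 2
        have h3 := pow_le_pow_left₀ (norm_nonneg _) h2 2
        nlinarith [sq_nonneg (‖smoothGrad J δ (θ i ω)‖ - L * δ)]
    refine h.trans_eq ?_
    simp only [Pi.add_apply]
    rw [integral_add ((hbi i).const_mul 2) (integrable_const _), integral_const_mul]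
    simp [hb]
  have hα0 : 0 ≤ α := by rw [hα]; positivity
  have hτ : 0 < Real.sqrt T := Real.sqrt_pos.2 hTpos
  have hττ : Real.sqrt T * Real.sqrt T = T := Real.mul_self_sqrt hTpos.le
  set s := Real.sqrt (2 * Δ₀ * L * W) with hs
  have hs0 : 0 ≤ s := Real.sqrt_nonneg _
  have hB : ∑ i ∈ Finset.range T, b i ≤ s * Real.sqrt T := by
    -- `W = 0` forces `G = 0`; the step size is then a quotient by zero.
    rcases hWnn.eq_or_lt with hW0 | hWpos
    · have hG0 : G ^ 2 = 0 := by nlinarith [sq_nonneg G]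
      have hb0 : ∀ i, b i = 0 := fun i => by
        simp only [hb]
        refine integral_eq_zero_of_ae (Filter.Eventually.of_forall fun ω => ?_)
        exact le_antisymm ((hDb _).trans_eq hG0) (by positivity)
      simp only [hb0, Finset.sum_const_zero]
      positivity
    -- `α = 0` with `W > 0` forces `Δ₀ = 0`, so that `θ₀` minimizes the smoothed objective.
    rcases hα0.eq_or_lt with hα0 | hαpos
    · have hΔ0 : Δ₀ = 0 := by
        have h1 : 2 * Δ₀ / (L * T * W) ≤ 0 := Real.sqrt_eq_zero'.1 (hα.symm.trans hα0.symm)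
        by_contra hne
        have : 0 < Δ₀ := lt_of_le_of_ne hΔnn (Ne.symm hne)
        have : 0 < 2 * Δ₀ / (L * T * W) := by positivity
        linarith
      have hD0 : smoothGrad J δ θ₀ = 0 := by
        refine smoothGrad_eq_zero_of_isMin hG hL hdiff hlip hsmooth hbdd fun y => ?_
        linarith [hinf y]
      have hconst : ∀ i, i ≤ T → ∀ ω, θ i ω = θ₀ := by
        intro i
        induction i with
        | zero => exact fun _ => hθ0
        | succ i ih =>
          intro hi ω
          rw [hupd' i hi, ← hα0]
          simp [ih (by omega) ω]
      have hb0 : ∀ i ∈ Finset.range T, b i = 0 := fun i hi => by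
        have hi' := (Finset.mem_range.1 hi).le
        simp [hb, hconst i hi', hD0]
      rw [Finset.sum_eq_zero hb0]
      positivity
    · refine sum_le_of_tuned_step (W := W) hL hTpos hWpos hΔnn ?_ hα hαpos hmain
      linarith [sq_nonneg G]
  calc (1 / (T : ℝ)) * ∑ i ∈ Finset.range T, ∫ ω, ‖gradient J (θ i ω)‖ ^ 2 ∂Q
      ≤ (1 / (T : ℝ)) * ∑ i ∈ Finset.range T, (2 * b i + 2 * L ^ 2 * δ ^ 2) := by
        gcongr with i
        exact hgb i
    _ = 2 * L ^ 2 * δ ^ 2 + 2 * (∑ i ∈ Finset.range T, b i) / T := by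
        rw [Finset.sum_add_distrib, ← Finset.mul_sum, Finset.sum_const, Finset.card_range,
          nsmul_eq_mul]
        field_simp
        ring
    _ ≤ 2 * L ^ 2 * δ ^ 2 + 2 * (s * Real.sqrt T) / T := by gcongr
    _ = 2 * L ^ 2 * δ ^ 2 + 2 * s / Real.sqrt T := by
        congr 1
        rw [div_eq_div_iff hTpos.ne' hτ.ne']
        linear_combination 2 * s * hττ
    _ ≤ 2 * L ^ 2 * δ ^ 2 + 4 * s / Real.sqrt T := by
        gcongr
        norm_num
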